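/- arXiv:2407.17619 — 5 statements merged into one kernel-verified Lean document; each statement's English description precedes it below -/
import Mathlib

section
/- Let G be a finite simple graph and let ψ > 0 be a real number. Suppose Y assigns a nonnegative real weight Y_e to each edge e of G such that for every vertex v the sum of Y_e over all edges e incident to v is at most 1 (i.e., Y is a fractional matching), and Y_e ≤ ψ for every edge e. Then the total weight ∑_{e ∈ E(G)} Y_e is at most (1 + ψ) · μ(G), where μ(G) denotes the matching number of G. -/
attribute [local instance] Classical.propDecidable

/-- `M` is a matching of `G`, viewed as a finite set of pairwise vertex-disjoint edges. -/
def SimpleGraph.IsMatchingFinset {V : Type*} (G : SimpleGraph V) (M : Finset (Sym2 V)) : Prop :=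
  (↑M : Set (Sym2 V)) ⊆ G.edgeSet ∧
    (M : Set (Sym2 V)).Pairwise fun e f => ∀ v, v ∈ e → v ∉ f

/-- The matching number of `G`: the largest cardinality of a matching. -/
noncomputable def SimpleGraph.matchingNumber {V : Type*} [Fintype V] (G : SimpleGraph V) : ℕ :=
  sSup {n | ∃ M : Finset (Sym2 V), G.IsMatchingFinset M ∧ M.card = n}

/-!
Isolate vertices covered by every maximum matching for as long as there are any. Each step lowers
the matching number and costs at most `1 ≤ 1 + ψ` of weight. Once no such vertex is left, Gallai's
lemma says that a maximum matching misses at most one vertex of each connected component, so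
`2 μ(G) ≥ |V| - c(G)`, where `c(G)` is the number of components. On a component with `k` vertices,
each vertex sees weight at most `min 1 ((k - 1) ψ)`, and `k * min 1 ((k - 1) ψ) ≤ (1 + ψ) (k - 1)`;
summing over the components gives `2 ∑ Y ≤ (1 + ψ) (|V| - c(G)) ≤ 2 (1 + ψ) μ(G)`.
-/

open scoped Finset

section Matching

variable {V : Type*} {G H : SimpleGraph V} {M : Finset (Sym2 V)} {e f : Sym2 V} {v x y : V}

/-- The set of edges `M` covers (saturates) the vertex `v`. -/
def Covers (M : Finset (Sym2 V)) (v : V) : Prop := ∃ e ∈ M, v ∈ e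

theorem Covers.mono {N : Finset (Sym2 V)} (hMN : M ⊆ N) (h : Covers M v) : Covers N v :=
  let ⟨e, he, hve⟩ := h
  ⟨e, hMN he, hve⟩

theorem isMatchingFinset_empty (G : SimpleGraph V) : G.IsMatchingFinset ∅ := by
  simp [SimpleGraph.IsMatchingFinset]

theorem isMatchingFinset_mono_graph (hHG : H ≤ G) (hM : H.IsMatchingFinset M) :
    G.IsMatchingFinset M :=
  ⟨hM.1.trans (SimpleGraph.edgeSet_mono hHG), hM.2⟩

theorem isMatchingFinset_of_subset {N : Finset (Sym2 V)} (hM : G.IsMatchingFinset M)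
    (hNM : N ⊆ M) : G.IsMatchingFinset N :=
  ⟨(Finset.coe_subset.2 hNM).trans hM.1, hM.2.mono (Finset.coe_subset.2 hNM)⟩

theorem eq_of_mem_of_mem_isMatchingFinset (hM : G.IsMatchingFinset M) (he : e ∈ M) (hf : f ∈ M)
    (hve : v ∈ e) (hvf : v ∈ f) : e = f := by
  by_contra hef
  exact hM.2 he hf hef v hve hvf

theorem isMatchingFinset_insert (hM : G.IsMatchingFinset M) (he : e ∈ G.edgeSet)
    (hfree : ∀ v ∈ e, ¬ Covers M v) : G.IsMatchingFinset (insert e M) := by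
  refine ⟨?_, ?_⟩
  · rw [Finset.coe_insert]
    exact Set.insert_subset he hM.1
  · rw [Finset.coe_insert]
    refine hM.2.insert fun f hf _ ↦ ⟨fun v hve hvf ↦ ?_, fun v hvf hve ↦ ?_⟩
    all_goals exact hfree v hve ⟨f, hf, hvf⟩

theorem isMatchingFinset_exchange (hM : G.IsMatchingFinset M) (hxy : G.Adj x y)
    (hx : ¬ Covers M x) (hf : f ∈ M) (hy : y ∈ f) :
    G.IsMatchingFinset (insert s(x, y) (M.erase f)) := by
  refine isMatchingFinset_insert (isMatchingFinset_of_subset hM (M.erase_subset f)) hxy ?_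
  intro w hw hcov
  rcases Sym2.mem_iff.1 hw with rfl | rfl
  · exact hx (hcov.mono (M.erase_subset f))
  · obtain ⟨g, hg, hwg⟩ := hcov
    exact Finset.ne_of_mem_erase hg
      (eq_of_mem_of_mem_isMatchingFinset hM (Finset.mem_of_mem_erase hg) hf hwg hy)

theorem card_exchange (hx : ¬ Covers M x) (hf : f ∈ M) :
    #(insert s(x, y) (M.erase f)) = #M := by
  have hnotMem : s(x, y) ∉ M.erase f := fun h ↦
    hx ⟨_, Finset.mem_of_mem_erase h, Sym2.mem_mk_left x y⟩
  rw [Finset.card_insert_of_notMem hnotMem, Finset.card_erase_add_one hf]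

theorem eq_or_covers_of_covers_exchange (hf : f ∈ M) (hy : y ∈ f)
    (h : Covers (insert s(x, y) (M.erase f)) v) : v = x ∨ Covers M v := by
  obtain ⟨g, hg, hvg⟩ := h
  rcases Finset.mem_insert.1 hg with rfl | hg
  · rcases Sym2.mem_iff.1 hvg with rfl | rfl
    · exact .inl rfl
    · exact .inr ⟨f, hf, hy⟩
  · exact .inr ⟨g, Finset.mem_of_mem_erase hg, hvg⟩

theorem card_filter_covers [Fintype V] (hM : G.IsMatchingFinset M) :
    #{v | Covers M v} = 2 * #M := by
  have hunion : ({v | Covers M v} : Finset V) = M.biUnion Sym2.toFinset := by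
    ext v
    simp only [Finset.mem_filter_univ, Finset.mem_biUnion, Sym2.mem_toFinset]
    rfl
  have hdisj : (M : Set (Sym2 V)).PairwiseDisjoint Sym2.toFinset := fun e he f hf hef ↦
    Finset.disjoint_left.2 fun v hve hvf ↦
      hM.2 he hf hef v (Sym2.mem_toFinset.1 hve) (Sym2.mem_toFinset.1 hvf)
  have hcard : ∀ e ∈ M, #e.toFinset = 2 := fun e he ↦
    e.card_toFinset_of_not_isDiag (G.not_isDiag_of_mem_edgeSet (hM.1 he))
  rw [hunion, Finset.card_biUnion hdisj, Finset.sum_const_nat hcard, mul_comm]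

theorem bddAbove_card_isMatchingFinset [Finite V] (G : SimpleGraph V) :
    BddAbove {n | ∃ M : Finset (Sym2 V), G.IsMatchingFinset M ∧ #M = n} := by
  have := Fintype.ofFinite V
  refine ⟨Fintype.card (Sym2 V), ?_⟩
  rintro _ ⟨M, -, rfl⟩
  exact M.card_le_univ

end Matching

section MaximumMatching

variable {V : Type*} [Fintype V] {G : SimpleGraph V} {M N : Finset (Sym2 V)} {t u v x : V}

theorem card_le_matchingNumber (hM : G.IsMatchingFinset M) : #M ≤ G.matchingNumber :=
  le_csSup (bddAbove_card_isMatchingFinset G) ⟨M, hM, rfl⟩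

/-- `M` is a matching of `G` of maximum cardinality. -/
structure IsMaximumMatching (G : SimpleGraph V) (M : Finset (Sym2 V)) : Prop where
  isMatchingFinset : G.IsMatchingFinset M
  card_eq : #M = G.matchingNumber

theorem exists_isMaximumMatching (G : SimpleGraph V) : ∃ M, IsMaximumMatching G M := by
  have hne : {n | ∃ M : Finset (Sym2 V), G.IsMatchingFinset M ∧ #M = n}.Nonempty :=
    ⟨0, ∅, isMatchingFinset_empty G, Finset.card_empty⟩
  obtain ⟨M, hM, hcard⟩ := Nat.sSup_mem hne (bddAbove_card_isMatchingFinset G)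
  exact ⟨M, hM, hcard⟩

theorem IsMaximumMatching.covers_or_covers_of_adj (hM : IsMaximumMatching G M)
    (huv : G.Adj u v) : Covers M u ∨ Covers M v := by
  by_contra! hfree
  have hnotMem : s(u, v) ∉ M := fun h ↦ hfree.1 ⟨_, h, Sym2.mem_mk_left u v⟩
  have hinsert : G.IsMatchingFinset (insert s(u, v) M) := by
    refine isMatchingFinset_insert hM.isMatchingFinset huv fun w hw ↦ ?_
    rcases Sym2.mem_iff.1 hw with rfl | rfl
    exacts [hfree.1, hfree.2]
  have hle := card_le_matchingNumber hinsert
  rw [Finset.card_insert_of_notMem hnotMem, hM.card_eq] at hle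
  omega

theorem IsMaximumMatching.exists_covers_not_covers_ne (hM : IsMaximumMatching G M)
    (hN : IsMaximumMatching G N) (huv : u ≠ v) (hMu : ¬ Covers M u) (hMv : ¬ Covers M v)
    (hNu : Covers N u) (hNv : Covers N v) (t : V) : ∃ x ≠ t, Covers M x ∧ ¬ Covers N x := by
  let A : Finset V := {w | Covers M w}
  let B : Finset V := {w | Covers N w}
  have hAB : #A = #B := by
    simp only [A, B, card_filter_covers hM.isMatchingFinset,
      card_filter_covers hN.isMatchingFinset, hM.card_eq, hN.card_eq]
  have hpair : {u, v} ⊆ B \ A := by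
    simp [Finset.insert_subset_iff, A, B, hMu, hMv, hNu, hNv]
  have htwo : 1 < #(A \ B) := by
    rw [Finset.card_sdiff_comm hAB]
    exact (Finset.card_pair huv).ge.trans (Finset.card_le_card hpair)
  obtain ⟨x, hx, hxt⟩ := Finset.exists_mem_ne htwo t
  exact ⟨x, hxt, by simpa [A, B] using hx⟩

theorem IsMaximumMatching.exists_card_inter_lt (hM : IsMaximumMatching G M)
    (hN : IsMaximumMatching G N) (hxM : Covers M x) (hxN : ¬ Covers N x) :
    ∃ N', IsMaximumMatching G N' ∧ (∀ v, Covers N' v → v = x ∨ Covers N v) ∧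
      #(M ∩ N) < #(M ∩ N') := by
  obtain ⟨_, heM, y, rfl⟩ := hxM
  have hxy : G.Adj x y := hM.isMatchingFinset.1 heM
  obtain ⟨f, hfN, hyf⟩ := (hN.covers_or_covers_of_adj hxy).resolve_left hxN
  have heN : s(x, y) ∉ N := fun h ↦ hxN ⟨_, h, Sym2.mem_mk_left x y⟩
  have hfM : f ∉ M := fun h ↦ heN <| by
    rwa [eq_of_mem_of_mem_isMatchingFinset hM.isMatchingFinset heM h (Sym2.mem_mk_right x y) hyf]
  refine ⟨insert s(x, y) (N.erase f),
    ⟨isMatchingFinset_exchange hN.isMatchingFinset hxy hxN hfN hyf,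
      (card_exchange hxN hfN).trans hN.card_eq⟩,
    fun v ↦ eq_or_covers_of_covers_exchange hfN hyf, Finset.card_lt_card ?_⟩
  rw [Finset.inter_insert_of_mem heM, Finset.inter_erase,
    Finset.erase_eq_of_notMem fun h ↦ hfM (Finset.mem_inter.1 h).1]
  exact Finset.ssubset_insert fun h ↦ heN (Finset.mem_inter.1 h).2

/-- The vertex `v` is essential in `G`: every maximum matching covers it. -/
def IsEssential (G : SimpleGraph V) (v : V) : Prop := ∀ M, IsMaximumMatching G M → Covers M v

/-- Some maximum matching of `G` misses both `u` and `v`. Gallai's lemma concerns the negation of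
this relation. -/
def AreJointlyMissed (G : SimpleGraph V) (u v : V) : Prop :=
  ∃ M, IsMaximumMatching G M ∧ ¬ Covers M u ∧ ¬ Covers M v

theorem not_areJointlyMissed_of_adj (huv : G.Adj u v) : ¬ AreJointlyMissed G u v :=
  fun ⟨_, hM, hu, hv⟩ ↦ (hM.covers_or_covers_of_adj huv).elim hu hv

-- Among the maximum matchings missing `t`, one sharing the most edges with a maximum matching `M`
-- that misses `u` and `v` could still be exchanged to share one more edge with `M`.
theorem not_areJointlyMissed_trans (ht : ¬ IsEssential G t) (huv : u ≠ v)
    (hut : ¬ AreJointlyMissed G u t) (htv : ¬ AreJointlyMissed G t v) :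
    ¬ AreJointlyMissed G u v := by
  rintro ⟨M, hM, hMu, hMv⟩
  have hmissing : Finset.Nonempty {N | IsMaximumMatching G N ∧ ¬ Covers N t} := by
    simpa [IsEssential, Finset.filter_nonempty_iff] using ht
  obtain ⟨N, hNmem, hNmax⟩ := Finset.exists_max_image _ (fun N ↦ #(M ∩ N)) hmissing
  simp only [Finset.mem_filter, Finset.mem_univ, true_and] at hNmem hNmax
  obtain ⟨hN, hNt⟩ := hNmem
  have hNu : Covers N u := by_contra fun hNu ↦ hut ⟨N, hN, hNu, hNt⟩
  have hNv : Covers N v := by_contra fun hNv ↦ htv ⟨N, hN, hNt, hNv⟩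
  obtain ⟨x, hxt, hMx, hNx⟩ := hM.exists_covers_not_covers_ne hN huv hMu hMv hNu hNv t
  obtain ⟨N', hN', hcov, hlt⟩ := hM.exists_card_inter_lt hN hMx hNx
  have hN't : ¬ Covers N' t := fun h ↦ (hcov t h).elim hxt.symm hNt
  exact hlt.not_ge (hNmax N' ⟨hN', hN't⟩)

theorem not_areJointlyMissed_of_reachable (hess : ∀ v, ¬ IsEssential G v)
    (hreach : G.Reachable u v) (huv : u ≠ v) : ¬ AreJointlyMissed G u v := by
  obtain ⟨p⟩ := hreach
  induction p with
  | nil => exact absurd rfl huv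
  | @cons u t v hut _ ih =>
    by_cases htv : t = v
    · exact not_areJointlyMissed_of_adj (htv ▸ hut)
    · exact not_areJointlyMissed_trans (hess t) huv (not_areJointlyMissed_of_adj hut) (ih htv)

theorem card_le_two_mul_matchingNumber_add_card_connectedComponent
    (hess : ∀ v, ¬ IsEssential G v) :
    Fintype.card V ≤ 2 * G.matchingNumber + Nat.card G.ConnectedComponent := by
  obtain ⟨M, hM⟩ := exists_isMaximumMatching G
  have hinj : Set.InjOn G.connectedComponentMk ({v | ¬ Covers M v} : Finset V) := by
    intro u hu v hv huv
    by_contra hne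
    exact not_areJointlyMissed_of_reachable hess (SimpleGraph.ConnectedComponent.exact huv) hne
      ⟨M, hM, by simpa using hu, by simpa using hv⟩
  have hmissed : #{v | ¬ Covers M v} ≤ Nat.card G.ConnectedComponent := by
    rw [Nat.card_eq_fintype_card]
    exact Finset.card_le_card_of_injOn _ (fun _ _ ↦ Finset.mem_univ _) hinj
  have hsplit := Finset.card_filter_add_card_filter_not (s := (Finset.univ : Finset V)) (Covers M)
  rw [card_filter_covers hM.isMatchingFinset, hM.card_eq, Finset.card_univ] at hsplit
  omega

theorem matchingNumber_deleteIncidenceSet_lt (hv : IsEssential G v) :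
    (G.deleteIncidenceSet v).matchingNumber < G.matchingNumber := by
  obtain ⟨N, hN⟩ := exists_isMaximumMatching (G.deleteIncidenceSet v)
  have hNG : G.IsMatchingFinset N :=
    isMatchingFinset_mono_graph (G.deleteIncidenceSet_le v) hN.isMatchingFinset
  have hNv : ¬ Covers N v := by
    rintro ⟨e, he, hve⟩
    have heG := hN.isMatchingFinset.1 he
    rw [SimpleGraph.edgeSet_deleteIncidenceSet] at heG
    exact heG.2 ⟨heG.1, hve⟩
  rw [← hN.card_eq]
  exact (card_le_matchingNumber hNG).lt_of_ne fun hcard ↦ hNv (hv N ⟨hNG, hcard⟩)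

end MaximumMatching

section FractionalMatching

variable {V K : Type*} [Fintype V]

theorem degree_lt_card_connectedComponentMk (G : SimpleGraph V) [DecidableRel G.Adj] (v : V) :
    G.degree v < #{w | G.connectedComponentMk w = G.connectedComponentMk v} := by
  rw [← G.card_neighborFinset_eq_degree v]
  refine Finset.card_lt_card (Finset.ssubset_iff.2 ⟨v, G.notMem_neighborFinset_self v, ?_⟩)
  refine Finset.insert_subset (by simp) fun w hw ↦ ?_
  have hadj : G.Adj v w := by simpa using hw
  simpa using hadj.reachable.symm

variable [DecidableEq V] {G H : SimpleGraph V} [DecidableRel G.Adj] [DecidableRel H.Adj]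

theorem sum_sum_incidenceFinset [NonAssocSemiring K] (Y : Sym2 V → K) :
    ∑ v, ∑ e ∈ G.incidenceFinset v, Y e = 2 * ∑ e ∈ G.edgeFinset, Y e := by
  have hmem (v : V) (e : Sym2 V) : v ∈ Finset.univ ∧ e ∈ G.incidenceFinset v ↔
      v ∈ e.toFinset ∧ e ∈ G.edgeFinset := by
    simp [SimpleGraph.incidenceSet, and_comm]
  rw [Finset.sum_comm' hmem, Finset.mul_sum]
  refine Finset.sum_congr rfl fun e he ↦ ?_
  have hdiag := G.not_isDiag_of_mem_edgeSet (SimpleGraph.mem_edgeFinset.1 he)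
  rw [Finset.sum_const, Sym2.card_toFinset_of_not_isDiag e hdiag, nsmul_eq_mul, Nat.cast_ofNat]

/-- `Y` is a fractional matching of `G`: edge weights are nonnegative and sum to at most `1` at each
vertex. The values of `Y` off the edges of `G` play no role. -/
structure IsFractionalMatching [Semiring K] [PartialOrder K] (G : SimpleGraph V)
    [DecidableRel G.Adj] (Y : Sym2 V → K) : Prop where
  nonneg : ∀ e ∈ G.edgeFinset, 0 ≤ Y e
  sum_le_one : ∀ v, ∑ e ∈ G.incidenceFinset v, Y e ≤ 1

theorem IsFractionalMatching.mono [Semiring K] [PartialOrder K] [IsOrderedRing K] {Y : Sym2 V → K}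
    (hY : IsFractionalMatching G Y) (hHG : H ≤ G) : IsFractionalMatching H Y where
  nonneg e he := hY.nonneg e (SimpleGraph.edgeFinset_mono hHG he)
  sum_le_one v := by
    have hsub : H.incidenceFinset v ⊆ G.incidenceFinset v := fun e he ↦ by
      rw [SimpleGraph.mem_incidenceFinset] at he ⊢
      exact ⟨SimpleGraph.edgeSet_mono hHG he.1, he.2⟩
    exact (Finset.sum_le_sum_of_subset_of_nonneg hsub fun e he _ ↦
      hY.nonneg e (G.incidenceFinset_subset v he)).trans (hY.sum_le_one v)

theorem IsFractionalMatching.sum_edgeFinset_le_deleteIncidenceSet_add_one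
    [Semiring K] [PartialOrder K] [IsOrderedRing K] {Y : Sym2 V → K}
    (hY : IsFractionalMatching G Y) (v : V) :
    ∑ e ∈ G.edgeFinset, Y e ≤ ∑ e ∈ (G.deleteIncidenceSet v).edgeFinset, Y e + 1 := by
  rw [SimpleGraph.edgeFinset_deleteIncidenceSet_eq_sdiff,
    ← Finset.sum_sdiff (G.incidenceFinset_subset v)]
  exact add_le_add_right (hY.sum_le_one v) _

variable [CommRing K] [LinearOrder K] [IsStrictOrderedRing K] {Y : Sym2 V → K} {ψ : K}

theorem mul_min_one_sub_one_mul_le {c : K} (hc : 1 ≤ c) :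
    c * min 1 ((c - 1) * ψ) ≤ (1 + ψ) * (c - 1) := by
  calc c * min 1 ((c - 1) * ψ)
      = (c - 1) * min 1 ((c - 1) * ψ) + min 1 ((c - 1) * ψ) := by ring
    _ ≤ (c - 1) * 1 + (c - 1) * ψ :=
      add_le_add (mul_le_mul_of_nonneg_left (min_le_left _ _) (sub_nonneg.2 hc)) (min_le_right _ _)
    _ = (1 + ψ) * (c - 1) := by ring

theorem sum_incidenceFinset_le_card_sub_one_mul (hψ : 0 ≤ ψ)
    (hub : ∀ e ∈ G.edgeFinset, Y e ≤ ψ) (v : V) :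
    ∑ e ∈ G.incidenceFinset v, Y e ≤
      (#{w | G.connectedComponentMk w = G.connectedComponentMk v} - 1) * ψ := by
  have hdeg : (G.degree v : K) ≤
      #{w | G.connectedComponentMk w = G.connectedComponentMk v} - 1 := by
    rw [le_sub_iff_add_le]
    exact_mod_cast degree_lt_card_connectedComponentMk G v
  calc ∑ e ∈ G.incidenceFinset v, Y e
      ≤ G.degree v * ψ := by
        rw [← G.card_incidenceFinset_eq_degree v, ← nsmul_eq_mul]
        exact Finset.sum_le_card_nsmul _ _ _ fun e he ↦ hub e (G.incidenceFinset_subset v he)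
    _ ≤ _ := mul_le_mul_of_nonneg_right hdeg hψ

theorem IsFractionalMatching.sum_connectedComponent_le (hY : IsFractionalMatching G Y)
    (hψ : 0 ≤ ψ) (hub : ∀ e ∈ G.edgeFinset, Y e ≤ ψ) (C : G.ConnectedComponent) :
    ∑ v with G.connectedComponentMk v = C, ∑ e ∈ G.incidenceFinset v, Y e ≤
      (1 + ψ) * (#{v | G.connectedComponentMk v = C} - 1) := by
  set c := #{v | G.connectedComponentMk v = C}
  have hpos : 1 ≤ c := by
    obtain ⟨v, hv⟩ := C.exists_rep
    exact Finset.card_pos.2 ⟨v, (Finset.mem_filter_univ v).2 hv⟩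
  have hvertex : ∀ v ∈ ({v | G.connectedComponentMk v = C} : Finset V),
      ∑ e ∈ G.incidenceFinset v, Y e ≤ min 1 (((c : K) - 1) * ψ) := by
    intro v hv
    obtain rfl := (Finset.mem_filter.1 hv).2
    exact le_min (hY.sum_le_one v) (sum_incidenceFinset_le_card_sub_one_mul hψ hub v)
  calc _ ≤ c • min 1 (((c : K) - 1) * ψ) := Finset.sum_le_card_nsmul _ _ _ hvertex
    _ = c * min 1 (((c : K) - 1) * ψ) := nsmul_eq_mul _ _
    _ ≤ _ := mul_min_one_sub_one_mul_le (by exact_mod_cast hpos)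

theorem IsFractionalMatching.two_mul_sum_edgeFinset_le (hY : IsFractionalMatching G Y)
    (hψ : 0 ≤ ψ) (hub : ∀ e ∈ G.edgeFinset, Y e ≤ ψ) :
    2 * ∑ e ∈ G.edgeFinset, Y e ≤
      (1 + ψ) * (Fintype.card V - Nat.card G.ConnectedComponent) := by
  have hcard : ∑ C : G.ConnectedComponent, (#{v | G.connectedComponentMk v = C} : K) =
      Fintype.card V := by
    rw [← Nat.cast_sum, ← Finset.card_univ]
    exact congrArg _ (Finset.card_eq_sum_card_fiberwise fun _ _ ↦ Finset.mem_univ _).symm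
  calc 2 * ∑ e ∈ G.edgeFinset, Y e
      = ∑ C : G.ConnectedComponent, ∑ v with G.connectedComponentMk v = C,
          ∑ e ∈ G.incidenceFinset v, Y e := by
        rw [← sum_sum_incidenceFinset]
        exact (Finset.sum_fiberwise _ _ _).symm
    _ ≤ ∑ C : G.ConnectedComponent, (1 + ψ) * (#{v | G.connectedComponentMk v = C} - 1) :=
        Finset.sum_le_sum fun C _ ↦ hY.sum_connectedComponent_le hψ hub C
    _ = (1 + ψ) * (Fintype.card V - Nat.card G.ConnectedComponent) := by
        rw [← Finset.mul_sum, Finset.sum_sub_distrib, hcard, Nat.card_eq_fintype_card]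
        simp

theorem IsFractionalMatching.sum_edgeFinset_le_of_forall_not_isEssential
    (hY : IsFractionalMatching G Y) (hψ : 0 ≤ ψ) (hub : ∀ e ∈ G.edgeFinset, Y e ≤ ψ)
    (hess : ∀ v, ¬ IsEssential G v) :
    ∑ e ∈ G.edgeFinset, Y e ≤ (1 + ψ) * G.matchingNumber := by
  have hgallai : (Fintype.card V - Nat.card G.ConnectedComponent : K) ≤ 2 * G.matchingNumber := by
    rw [sub_le_iff_le_add]
    exact_mod_cast card_le_two_mul_matchingNumber_add_card_connectedComponent hess
  have hweight := hY.two_mul_sum_edgeFinset_le hψ hub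
  have hscaled := mul_le_mul_of_nonneg_left hgallai (add_nonneg zero_le_one hψ)
  linarith

theorem fractional_matching_le_general (hY : IsFractionalMatching G Y) (hψ : 0 ≤ ψ)
    (hub : ∀ e ∈ G.edgeFinset, Y e ≤ ψ) :
    ∑ e ∈ G.edgeFinset, Y e ≤ (1 + ψ) * G.matchingNumber := by
  induction hμ : G.matchingNumber using Nat.strong_induction_on generalizing G with
  | _ μ ih =>
    subst hμ
    by_cases hess : ∀ v, ¬ IsEssential G v
    · exact hY.sum_edgeFinset_le_of_forall_not_isEssential hψ hub hess
    push Not at hess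
    obtain ⟨v, hv⟩ := hess
    have hle := G.deleteIncidenceSet_le v
    have hlt := matchingNumber_deleteIncidenceSet_lt hv
    have hlt' : ((G.deleteIncidenceSet v).matchingNumber : K) + 1 ≤ G.matchingNumber := by
      exact_mod_cast hlt
    calc ∑ e ∈ G.edgeFinset, Y e
        ≤ ∑ e ∈ (G.deleteIncidenceSet v).edgeFinset, Y e + 1 :=
          hY.sum_edgeFinset_le_deleteIncidenceSet_add_one v
      _ ≤ (1 + ψ) * (G.deleteIncidenceSet v).matchingNumber + (1 + ψ) :=
          add_le_add (ih _ hlt (hY.mono hle)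
            (fun e he ↦ hub e (SimpleGraph.edgeFinset_mono hle he)) rfl)
            (le_add_of_nonneg_right hψ)
      _ = (1 + ψ) * ((G.deleteIncidenceSet v).matchingNumber + 1) := by ring
      _ ≤ (1 + ψ) * G.matchingNumber :=
          mul_le_mul_of_nonneg_left hlt' (add_nonneg zero_le_one hψ)

end FractionalMatching

/-- Any fractional matching with maximum edge weight at most `ψ` has total weight at most
`(1 + ψ) · μ(G)`. -/
theorem fractional_matching_le {V : Type*} [Fintype V] [DecidableEq V]
    (G : SimpleGraph V) [DecidableRel G.Adj] (ψ : ℝ) (hψ : 0 < ψ)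
    (Y : Sym2 V → ℝ)
    (hnn : ∀ e ∈ G.edgeFinset, 0 ≤ Y e)
    (hub : ∀ e ∈ G.edgeFinset, Y e ≤ ψ)
    (hfrac : ∀ v : V, ∑ e ∈ G.incidenceFinset v, Y e ≤ 1) :
    ∑ e ∈ G.edgeFinset, Y e ≤ (1 + ψ) * G.matchingNumber := by
  exact fractional_matching_le_general ⟨hnn, hfrac⟩ hψ.le hub
end

section
/- Let V be a finite vertex set, let α̃ and T be natural numbers, and let s be a stream of length T each of whose entries s_j is either ⊥ or an edge (an unordered pair of distinct vertices of V), such that the non-⊥ entries of s are pairwise distinct edges. Fix a set Samp ⊆ {1, …, T} of sampled indices. For each t ∈ {1, …, T}, define the kept set K_t(s) as the set of indices j ∈ Samp with j ≤ t such that s_j is an edge and, for each endpoint w of s_j, the number of indices i with j < i ≤ t for which s_i is an edge incident to w is at most α̃. Let t* ∈ {1, …, T} be an index with s_{t*} an edge, and let s' be the stream obtained from s by setting s'_{t*} = ⊥ and s'_i = s_i for all i ≠ t*. Then for every t ∈ {1, …, T}, the cardinalities of the kept sets satisfy | |K_t(s)| − |K_t(s')| | ≤ 2. -/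
attribute [local instance] Classical.propDecidable

/-- The kept set at time `t`: sampled indices `j ≤ t` carrying an edge such that, for each
endpoint `w` of that edge, at most `α̃` later stream entries (up to time `t`) are edges
incident to `w`. -/
noncomputable def keptSet {V : Type*} [Fintype V] {T : ℕ} (αtilde : ℕ)
    (s : Fin T → Option (Sym2 V)) (Samp : Finset (Fin T)) (t : Fin T) : Finset (Fin T) :=
  Samp.filter fun j => j ≤ t ∧ ∃ e, s j = some e ∧ ∀ w ∈ e,
    (Finset.univ.filter fun i : Fin T =>
      j < i ∧ i ≤ t ∧ ∃ f, s i = some f ∧ w ∈ f).card ≤ αtilde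

/-!
Deleting the update at `t₀` lowers the number of later edges at a vertex `w` by at most one, and
only if `w` is an endpoint of the deleted edge. Hence the only index that can leave the kept set is
`t₀` itself, and an index `j` can enter it only if some endpoint `w` of the deleted edge is touched
at time `j` and exactly `α̃ + 1` times afterwards. Among the times at which `w` is touched, the
number of later touches is strictly decreasing, so each of the at most two endpoints admits at most
one such `j`.
-/

open Finset

theorem strictAntiOn_card_filter_lt {ι : Type*} [Preorder ι] [DecidableLT ι] (A : Finset ι) :
    StrictAntiOn (fun j => #{i ∈ A | j < i}) (A : Set ι) := by
  intro j _ k hk hjk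
  refine card_lt_card ((ssubset_iff_of_subset ?_).2 ⟨k, ?_, ?_⟩)
  · exact monotone_filter_right A fun _ _ hki => hjk.trans hki
  · exact mem_filter.2 ⟨hk, hjk⟩
  · simp

section Touches

variable {V ι : Type*}

/-- The update of the stream `s` at time `i` is an edge incident to `w`; an empty update touches
no vertex. -/
def Touches (s : ι → Option (Sym2 V)) (i : ι) (w : V) : Prop :=
  ∃ e, s i = some e ∧ w ∈ e

theorem card_filter_touches_le_two [Fintype V] (s : ι → Option (Sym2 V)) (i : ι) :
    #{w | Touches s i w} ≤ 2 := by
  rcases hi : s i with _ | e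
  · simp [Touches, hi]
  · induction e using Sym2.ind with
    | _ u v =>
      have endpoints_subset : ({w | Touches s i w} : Finset V) ⊆ {u, v} := by
        intro w
        simp [Touches, hi]
      exact (card_le_card endpoints_subset).trans card_le_two

theorem touches_update_none_iff [DecidableEq ι] (s : ι → Option (Sym2 V)) (t₀ i : ι) (w : V) :
    Touches (Function.update s t₀ none) i w ↔ i ≠ t₀ ∧ Touches s i w := by
  rcases eq_or_ne i t₀ with rfl | hi
  · simp [Touches]
  · simp [Touches, hi]

end Touches

section LaterDegree

variable {V ι : Type*} [Fintype ι]

/-- The times up to `t` at which the stream `s` touches the vertex `w`. -/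
noncomputable def touchTimes [LE ι] (s : ι → Option (Sym2 V)) (t : ι) (w : V) : Finset ι :=
  {i | i ≤ t ∧ Touches s i w}

theorem mem_touchTimes [LE ι] {s : ι → Option (Sym2 V)} {t i : ι} {w : V} :
    i ∈ touchTimes s t w ↔ i ≤ t ∧ Touches s i w := by
  simp [touchTimes]

theorem touchTimes_update_none [DecidableEq ι] [LE ι] (s : ι → Option (Sym2 V)) (t₀ t : ι) (w : V) :
    touchTimes (Function.update s t₀ none) t w = (touchTimes s t w).erase t₀ := by
  ext i
  simp only [mem_erase, mem_touchTimes, touches_update_none_iff]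
  tauto

/-- The number of times after `j` and up to `t` at which the stream `s` touches `w`: the quantity
that `keptSet` compares with its threshold. -/
noncomputable def laterDegree [Preorder ι] (s : ι → Option (Sym2 V)) (t : ι) (w : V) (j : ι) : ℕ :=
  #{i ∈ touchTimes s t w | j < i}

section Deletion

variable [DecidableEq ι] [Preorder ι]

theorem laterDegree_update_none (s : ι → Option (Sym2 V)) (t₀ t : ι) (w : V) (j : ι) :
    laterDegree (Function.update s t₀ none) t w j =
      #({i ∈ touchTimes s t w | j < i}.erase t₀) := by
  rw [laterDegree, touchTimes_update_none, filter_erase]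

theorem laterDegree_update_none_le (s : ι → Option (Sym2 V)) (t₀ t : ι) (w : V) (j : ι) :
    laterDegree (Function.update s t₀ none) t w j ≤ laterDegree s t w j := by
  rw [laterDegree_update_none]
  exact card_erase_le

theorem laterDegree_le_laterDegree_update_none_add_one (s : ι → Option (Sym2 V)) (t₀ t : ι)
    (w : V) (j : ι) :
    laterDegree s t w j ≤ laterDegree (Function.update s t₀ none) t w j + 1 := by
  rw [laterDegree_update_none]
  exact Nat.sub_le_iff_le_add.1 pred_card_le_card_erase

theorem laterDegree_update_none_of_not_touches {s : ι → Option (Sym2 V)} {t₀ : ι} {w : V}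
    (hw : ¬ Touches s t₀ w) (t j : ι) :
    laterDegree (Function.update s t₀ none) t w j = laterDegree s t w j := by
  have t₀_notMem : t₀ ∉ touchTimes s t w := fun h => hw (mem_touchTimes.1 h).2
  rw [laterDegree, touchTimes_update_none, erase_eq_of_notMem t₀_notMem, laterDegree]

end Deletion

theorem card_filter_laterDegree_eq_le_one [LinearOrder ι] (s : ι → Option (Sym2 V)) (t : ι) (w : V)
    (n : ℕ) : #{j ∈ touchTimes s t w | laterDegree s t w j = n} ≤ 1 := by
  refine card_le_one.2 fun i hi j hj => ?_
  rw [mem_filter] at hi hj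
  exact (strictAntiOn_card_filter_lt (touchTimes s t w)).injOn hi.1 hj.1 (hi.2.trans hj.2.symm)

end LaterDegree

section KeptSet

variable {V : Type*} [Fintype V] {T : ℕ}

theorem mem_keptSet {α : ℕ} {s : Fin T → Option (Sym2 V)} {Samp : Finset (Fin T)} {t j : Fin T} :
    j ∈ keptSet α s Samp t ↔
      j ∈ Samp ∧ j ≤ t ∧ ∃ e, s j = some e ∧ ∀ w ∈ e, laterDegree s t w j ≤ α := by
  have laterDegree_eq (w : V) : laterDegree s t w j =
      #{i | j < i ∧ i ≤ t ∧ ∃ f, s i = some f ∧ w ∈ f} := by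
    rw [laterDegree]
    congr 1
    ext i
    simp only [mem_filter, mem_touchTimes, mem_univ, true_and, Touches]
    tauto
  simp only [keptSet, mem_filter, laterDegree_eq]

variable (α : ℕ) (s : Fin T → Option (Sym2 V)) (Samp : Finset (Fin T)) (t₀ t : Fin T)

theorem keptSet_sdiff_keptSet_update_none_subset :
    keptSet α s Samp t \ keptSet α (Function.update s t₀ none) Samp t ⊆ {t₀} := by
  intro j hj
  obtain ⟨hj_kept, hj_notKept⟩ := mem_sdiff.1 hj
  obtain ⟨hjS, hjt, e, he, hdeg⟩ := mem_keptSet.1 hj_kept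
  by_contra hne
  refine hj_notKept (mem_keptSet.2 ⟨hjS, hjt, e, ?_, fun w hw => ?_⟩)
  · rwa [Function.update_of_ne (notMem_singleton.1 hne)]
  · exact (laterDegree_update_none_le s t₀ t w j).trans (hdeg w hw)

theorem keptSet_update_none_sdiff_keptSet_subset :
    keptSet α (Function.update s t₀ none) Samp t \ keptSet α s Samp t ⊆
      ({w | Touches s t₀ w} : Finset V).biUnion fun w =>
        {j ∈ touchTimes s t w | laterDegree s t w j = α + 1} := by
  intro j hj
  obtain ⟨hj_kept, hj_notKept⟩ := mem_sdiff.1 hj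
  obtain ⟨hjS, hjt, e, he', hdeg'⟩ := mem_keptSet.1 hj_kept
  have hne : j ≠ t₀ := by
    rintro rfl
    simp at he'
  have he : s j = some e := by rwa [Function.update_of_ne hne] at he'
  obtain ⟨w, hw, hdeg⟩ : ∃ w ∈ e, α < laterDegree s t w j := by
    by_contra! hdeg
    exact hj_notKept (mem_keptSet.2 ⟨hjS, hjt, e, he, hdeg⟩)
  have touches_w : Touches s t₀ w := by
    by_contra hw₀
    exact hdeg.not_ge (laterDegree_update_none_of_not_touches hw₀ t j ▸ hdeg' w hw)
  have hdeg_eq : laterDegree s t w j = α + 1 :=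
    le_antisymm ((laterDegree_le_laterDegree_update_none_add_one s t₀ t w j).trans
      (Nat.add_le_add_right (hdeg' w hw) 1)) hdeg
  exact mem_biUnion.2 ⟨w, mem_filter.2 ⟨mem_univ w, touches_w⟩,
    mem_filter.2 ⟨mem_touchTimes.2 ⟨hjt, e, he, hw⟩, hdeg_eq⟩⟩

theorem card_keptSet_sdiff_keptSet_update_none_le_one :
    #(keptSet α s Samp t \ keptSet α (Function.update s t₀ none) Samp t) ≤ 1 :=
  card_le_card (keptSet_sdiff_keptSet_update_none_subset α s Samp t₀ t)

theorem card_keptSet_update_none_sdiff_keptSet_le_two :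
    #(keptSet α (Function.update s t₀ none) Samp t \ keptSet α s Samp t) ≤ 2 :=
  calc
    _ ≤ _ := card_le_card (keptSet_update_none_sdiff_keptSet_subset α s Samp t₀ t)
    _ ≤ #{w | Touches s t₀ w} * 1 :=
      card_biUnion_le_card_mul _ _ _ fun w _ => card_filter_laterDegree_eq_le_one s t w (α + 1)
    _ ≤ 2 := by simpa using card_filter_touches_le_two s t₀

theorem keptSet_sensitivity_general :
    |(#(keptSet α s Samp t) : ℤ) - #(keptSet α (Function.update s t₀ none) Samp t)| ≤ 2 := by
  set K := keptSet α s Samp t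
  set K' := keptSet α (Function.update s t₀ none) Samp t
  have card_lost : #(K \ K') ≤ 1 := card_keptSet_sdiff_keptSet_update_none_le_one α s Samp t₀ t
  have card_gained : #(K' \ K) ≤ 2 := card_keptSet_update_none_sdiff_keptSet_le_two α s Samp t₀ t
  have card_K_le : #K ≤ #(K \ K') + #K' := card_le_card_sdiff_add_card
  have card_K'_le : #K' ≤ #(K' \ K) + #K := card_le_card_sdiff_add_card
  rw [abs_le]
  constructor <;> omega

end KeptSet

/-- Replacing a single edge update of an insertion-only stream (with pairwise-distinct edges)
by an empty update changes the size of the kept set by at most `2`, at every time step. -/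
theorem keptSet_sensitivity {V : Type*} [Fintype V] [DecidableEq V] {T : ℕ} (αtilde : ℕ)
    (s : Fin T → Option (Sym2 V))
    (hdiag : ∀ j e, s j = some e → ¬ e.IsDiag)
    (hdist : ∀ i j e e', s i = some e → s j = some e' → i ≠ j → e ≠ e')
    (Samp : Finset (Fin T))
    (tstar : Fin T) (estar : Sym2 V) (hstar : s tstar = some estar)
    (s' : Fin T → Option (Sym2 V)) (hs' : s' = Function.update s tstar none) :
    ∀ t : Fin T,
      |((keptSet αtilde s Samp t).card : ℤ) - ((keptSet αtilde s' Samp t).card : ℤ)| ≤ 2 := by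
  subst hs'
  exact keptSet_sensitivity_general αtilde s Samp tstar
end

section
/- Let η > 0, let α ≥ 1, and let G be a finite simple graph with the property that every vertex subset S induces at most α·|S| edges (which holds in particular whenever G has arboricity at most α). Set Λ = (1 + 1/η) · 2α and let V_> = {v ∈ V(G) : deg_G(v) > Λ}. Then for every vertex cover C of G, the set U_> = V_> \ C satisfies |U_>| ≤ η · |C|. -/
attribute [local instance] Classical.propDecidable

/-!
Let `U` be a finite set of vertices outside the cover `C`, each of degree more than
`(1 + 1/η) * α`. Every edge at a vertex of `U` has its other end in `C`, so the degrees in `U` add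
up to the number of edges between `U` and `C`. These edges are induced by `U ∪ C`, so there are at
most `α * (|U| + |C|)` of them. Comparing with the lower bound `|U| * (1 + 1/η) * α` on the degree
sum gives `|U| ≤ η * |C|`. No edge is counted twice, so this threshold is half of `Λ`.
-/

open Finset

lemma finite_and_ncard_le_of_forall_finset {β : Type*} {s : Set β} {b : ℝ}
    (h : ∀ t : Finset β, ↑t ⊆ s → (#t : ℝ) ≤ b) : s.Finite ∧ (s.ncard : ℝ) ≤ b := by
  have hs : s.Finite := by
    by_contra hinf
    obtain ⟨n, hn⟩ := exists_nat_gt b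
    obtain ⟨t, hts, rfl⟩ := Set.Infinite.exists_subset_card_eq hinf n
    exact (h t hts).not_gt hn
  refine ⟨hs, ?_⟩
  rw [Set.ncard_eq_toFinset_card s hs]
  exact h hs.toFinset hs.coe_toFinset.subset

section Graph

variable {V : Type*} {G : SimpleGraph V} {η α : ℝ} {U C : Finset V}

/-- The edges of `G` induced by `S`, that is, those with both endpoints in `S`. Cutting them out of
`S.sym2` gives a `Finset` even if `G` is infinite. -/
noncomputable def inducedEdges (G : SimpleGraph V) (S : Finset V) : Finset (Sym2 V) :=
  {e ∈ S.sym2 | e ∈ G.edgeSet}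

lemma inducedEdges_eq_filter_edgeFinset (G : SimpleGraph V) [Fintype G.edgeSet] (S : Finset V)
    [DecidablePred fun e : Sym2 V ↦ ∀ v ∈ e, v ∈ S] :
    inducedEdges G S = {e ∈ G.edgeFinset | ∀ v ∈ e, v ∈ S} := by
  ext e
  simp only [inducedEdges, mem_filter, mem_sym2_iff, SimpleGraph.mem_edgeFinset, and_comm]

lemma ncard_neighborSet_eq_degree (G : SimpleGraph V) (v : V) [Fintype (G.neighborSet v)] :
    (G.neighborSet v).ncard = G.degree v :=
  Set.ncard_eq_toFinset_card' (G.neighborSet v)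

lemma isVertexCover_iff_forall_mem_edgeSet {c : Set V} :
    G.IsVertexCover c ↔ ∀ e ∈ G.edgeSet, ∃ v ∈ c, v ∈ e := by
  simp [SimpleGraph.IsVertexCover, Sym2.forall, and_or_left, exists_or]

lemma neighborSet_subset_of_isVertexCover {c : Set V} {u : V} (hc : G.IsVertexCover c)
    (hu : u ∉ c) : G.neighborSet u ⊆ c :=
  fun _ huw ↦ (hc huw).resolve_left hu

lemma card_interedges_eq_sum_card_filter (G : SimpleGraph V) (U C : Finset V) :
    #(G.interedges U C) = ∑ u ∈ U, #{w ∈ C | G.Adj u w} := by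
  simp only [SimpleGraph.interedges, Rel.interedges, card_filter, sum_product]

lemma sum_ncard_neighborSet_eq_card_interedges (hC : G.IsVertexCover C) (hUC : Disjoint U C) :
    ∑ u ∈ U, (G.neighborSet u).ncard = #(G.interedges U C) := by
  rw [card_interedges_eq_sum_card_filter]
  refine sum_congr rfl fun u hu ↦ ?_
  have hsub : G.neighborSet u ⊆ C :=
    neighborSet_subset_of_isVertexCover hC (disjoint_left.1 hUC hu)
  rw [← Set.ncard_coe_finset, coe_filter]
  congr 1
  ext w
  exact ⟨fun hw ↦ ⟨hsub hw, hw⟩, And.right⟩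

lemma card_interedges_le_card_inducedEdges_union (G : SimpleGraph V) (hUC : Disjoint U C) :
    #(G.interedges U C) ≤ #(inducedEdges G (U ∪ C)) := by
  refine card_le_card_of_injOn (fun p ↦ s(p.1, p.2)) ?_ ?_
  · rintro ⟨u, w⟩ huw
    obtain ⟨hu, hw, hadj⟩ := G.mem_interedges_iff.1 huw
    exact mem_filter.2
      ⟨mk_mem_sym2_iff.2 ⟨mem_union_left C hu, mem_union_right U hw⟩, hadj⟩
  · rintro ⟨u, w⟩ huw ⟨u', w'⟩ huw' heq
    obtain ⟨hu, -, -⟩ := G.mem_interedges_iff.1 huw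
    obtain ⟨-, hw', -⟩ := G.mem_interedges_iff.1 huw'
    rcases Sym2.eq_iff.1 heq with ⟨rfl, rfl⟩ | ⟨rfl, -⟩
    · rfl
    · exact absurd hw' (disjoint_left.1 hUC hu)

lemma sum_ncard_neighborSet_le_of_card_inducedEdges_le
    (hG : ∀ S : Finset V, (#(inducedEdges G S) : ℝ) ≤ α * #S)
    (hC : G.IsVertexCover C) (hUC : Disjoint U C) :
    ∑ u ∈ U, ((G.neighborSet u).ncard : ℝ) ≤ α * (#U + #C) :=
  calc ∑ u ∈ U, ((G.neighborSet u).ncard : ℝ)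
    _ = #(G.interedges U C) := mod_cast sum_ncard_neighborSet_eq_card_interedges hC hUC
    _ ≤ #(inducedEdges G (U ∪ C)) := mod_cast card_interedges_le_card_inducedEdges_union G hUC
    _ ≤ α * #(U ∪ C) := hG (U ∪ C)
    _ = α * (#U + #C) := by rw [card_union_of_disjoint hUC, Nat.cast_add]

lemma card_le_mul_card_of_forall_lt_ncard_neighborSet (hη : 0 < η)
    (hG : ∀ S : Finset V, (#(inducedEdges G S) : ℝ) ≤ α * #S)
    (hC : G.IsVertexCover C) (hUC : Disjoint U C)
    (hdeg : ∀ u ∈ U, (1 + 1 / η) * α < (G.neighborSet u).ncard) :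
    (#U : ℝ) ≤ η * #C := by
  rcases U.eq_empty_or_nonempty with rfl | hU
  · rw [card_empty, Nat.cast_zero]
    positivity
  have ⟨u, _⟩ := hU
  have hα : 0 ≤ α := by simpa using (Nat.cast_nonneg _).trans (hG {u})
  have hcount : #U * ((1 + 1 / η) * α) < α * (#U + #C) :=
    calc #U * ((1 + 1 / η) * α)
      _ = ∑ _u ∈ U, (1 + 1 / η) * α := by rw [sum_const, nsmul_eq_mul]
      _ < ∑ u ∈ U, ((G.neighborSet u).ncard : ℝ) := sum_lt_sum_of_nonempty hU hdeg
      _ ≤ α * (#U + #C) := sum_ncard_neighborSet_le_of_card_inducedEdges_le hG hC hUC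
  have hdiv : #U / η < (#C : ℝ) := lt_of_mul_lt_mul_left (by linear_combination hcount) hα
  exact ((div_lt_iff₀' hη).1 hdiv).le

end Graph

/-- Vertices outside the finite cover `C` have all their neighbors in `C`, so `ncard` takes no junk
value here. -/
theorem high_degree_outside_cover_general {V : Type*} {G : SimpleGraph V} {η α : ℝ} (hη : 0 < η)
    (hG : ∀ S : Finset V, (#(inducedEdges G S) : ℝ) ≤ α * #S)
    {C : Finset V} (hC : G.IsVertexCover C) {U : Set V} (hUC : Disjoint U C)
    (hdeg : ∀ u ∈ U, (1 + 1 / η) * α < (G.neighborSet u).ncard) :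
    U.Finite ∧ (U.ncard : ℝ) ≤ η * #C :=
  finite_and_ncard_le_of_forall_finset fun _ hU ↦
    card_le_mul_card_of_forall_lt_ncard_neighborSet hη hG hC
      (disjoint_coe.1 (hUC.mono_left hU)) fun u hu ↦ hdeg u (hU hu)

/-- If every vertex subset `S` of `G` induces at most `α·|S|` edges (as is the case when `G`
has arboricity at most `α`), `Λ = (1 + 1/η)·2α`, and `C` is any vertex cover of `G`, then the
set `U_> = V_> \ C` of high-degree vertices outside `C` satisfies `|U_>| ≤ η·|C|`. -/
theorem high_degree_outside_cover {V : Type*} [Fintype V] [DecidableEq V]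
    (G : SimpleGraph V) [DecidableRel G.Adj] (η α : ℝ) (hη : 0 < η) (hα : 1 ≤ α)
    (harb : ∀ S : Finset V,
      ((G.edgeFinset.filter fun e => ∀ v ∈ e, v ∈ S).card : ℝ) ≤ α * S.card)
    (C : Finset V) (hC : ∀ e ∈ G.edgeFinset, ∃ v ∈ C, v ∈ e) :
    (((Finset.univ.filter fun v : V =>
        (1 + 1 / η) * (2 * α) < (G.degree v : ℝ)) \ C).card : ℝ) ≤ η * C.card := by
  have hG : ∀ S : Finset V, (#(inducedEdges G S) : ℝ) ≤ α * #S := by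
    simpa only [← inducedEdges_eq_filter_edgeFinset] using harb
  have hcover : G.IsVertexCover C := isVertexCover_iff_forall_mem_edgeSet.2 (by simpa using hC)
  have hΛ : (1 + 1 / η) * α ≤ (1 + 1 / η) * (2 * α) := by gcongr; linarith
  rw [← Set.ncard_coe_finset]
  refine (high_degree_outside_cover_general hη hG hcover (disjoint_coe.2 sdiff_disjoint)
    fun v hv ↦ hΛ.trans_lt ?_).2
  simpa only [ncard_neighborSet_eq_degree] using (mem_filter.1 (mem_sdiff.1 hv).1).2
end

section
/- Let η > 0, let α ≥ 1, and let G be a finite simple graph with the property that every vertex subset S induces at most α·|S| edges (which holds in particular whenever G has arboricity at most α). Set Λ = (1 + 1/η) · 2α and let V_>^Λ = {v ∈ V(G) : deg_G(v) > Λ}. Let H be any spanning subgraph of G that contains every edge of G both of whose endpoints have degree at most Λ in G. Suppose C is a vertex cover of H satisfying |C| ≤ β · τ(H) + ζ, where τ(H) denotes the minimum size of a vertex cover of H and β, ζ ≥ 0. Then C ∪ V_>^Λ is a vertex cover of G of cardinality at most (1 + β + η) · τ(G) + ζ. -/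
attribute [local instance] Classical.propDecidable

/-- The minimum size of a vertex cover of `G`. -/
noncomputable def vertexCoverNumber {V : Type*} [Fintype V] (G : SimpleGraph V) : ℕ :=
  sInf {n | ∃ C : Finset V, (∀ e ∈ G.edgeSet, ∃ v ∈ C, v ∈ e) ∧ C.card = n}

/-! A minimum vertex cover `M` of `G` covers `H`, so `τ(H) ≤ τ(G)` and it is enough to bound the
number of high-degree vertices by `(1 + η)·|M|`. Those outside `M` form an independent set `W` all
of whose edges go to `M`, so the degrees in `W` add up to at most the number of edges induced by
`W ∪ M`, which is at most `α·(|W| + |M|)`. Since each of these degrees exceeds `(1 + 1/η)·α`, this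
forces `|W| ≤ η·|M|`. -/

section VertexCover

variable {V : Type*} {G H : SimpleGraph V}

theorem isVertexCover_coe_iff_forall_mem_edgeSet {C : Finset V} :
    G.IsVertexCover C ↔ ∀ e ∈ G.edgeSet, ∃ v ∈ C, v ∈ e := by
  simp [SimpleGraph.IsVertexCover, Sym2.forall, and_or_left, exists_or]

theorem isVertexCover_union_of_avoiding_edges_mem {B C : Set V}
    (hH : ∀ e ∈ G.edgeSet, (∀ v ∈ e, v ∉ B) → e ∈ H.edgeSet) (hC : H.IsVertexCover C) :
    G.IsVertexCover (C ∪ B) := by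
  intro v w hvw
  by_cases havoid : v ∉ B ∧ w ∉ B
  · have hHvw : H.Adj v w := hH s(v, w) hvw (by simpa using havoid)
    exact (hC hHvw).imp Or.inl Or.inl
  · rcases not_and_or.mp havoid with hv | hw
    · exact Or.inl (Or.inr (not_not.mp hv))
    · exact Or.inr (Or.inr (not_not.mp hw))

variable [Fintype V]

theorem exists_isVertexCover_card_eq_vertexCoverNumber (G : SimpleGraph V) :
    ∃ C : Finset V, G.IsVertexCover C ∧ C.card = vertexCoverNumber G := by
  simp only [isVertexCover_coe_iff_forall_mem_edgeSet]
  have hne : {n | ∃ C : Finset V, (∀ e ∈ G.edgeSet, ∃ v ∈ C, v ∈ e) ∧ C.card = n}.Nonempty :=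
    ⟨_, Finset.univ, isVertexCover_coe_iff_forall_mem_edgeSet.mp (by simp), rfl⟩
  exact Nat.sInf_mem hne

theorem vertexCoverNumber_le_card {C : Finset V} (hC : G.IsVertexCover C) :
    vertexCoverNumber G ≤ C.card :=
  Nat.sInf_le ⟨C, isVertexCover_coe_iff_forall_mem_edgeSet.mp hC, rfl⟩

theorem vertexCoverNumber_mono (hHG : H ≤ G) : vertexCoverNumber H ≤ vertexCoverNumber G := by
  obtain ⟨M, hM, hMcard⟩ := exists_isVertexCover_card_eq_vertexCoverNumber G
  exact hMcard ▸ vertexCoverNumber_le_card (hM.mono hHG)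

end VertexCover

section EdgesWithin

variable {V : Type*} {G : SimpleGraph V} {S : Finset V}

/-- The edges of `G` induced by the finite vertex set `S`, counted to express sparsity of `G`.
Selecting them from the unordered pairs in `S` makes this a `Finset` for infinite graphs too. -/
noncomputable def edgesWithin (G : SimpleGraph V) (S : Finset V) : Finset (Sym2 V) :=
  S.sym2.filter (· ∈ G.edgeSet)

theorem mem_edgesWithin {e : Sym2 V} : e ∈ edgesWithin G S ↔ e ∈ G.edgeSet ∧ ∀ v ∈ e, v ∈ S := by
  rw [edgesWithin, Finset.mem_filter, Finset.mem_sym2_iff, and_comm]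

theorem filter_edgeFinset_eq_edgesWithin [Fintype G.edgeSet]
    [DecidablePred fun e : Sym2 V => ∀ v ∈ e, v ∈ S] :
    (G.edgeFinset.filter fun e => ∀ v ∈ e, v ∈ S) = edgesWithin G S := by
  ext e
  rw [Finset.mem_filter, SimpleGraph.mem_edgeFinset, mem_edgesWithin]

end EdgesWithin

section DegreeSum

variable {V : Type*} [DecidableEq V] {G : SimpleGraph V} {W M : Finset V}

theorem mem_union_of_mem_incidenceSet (hM : G.IsVertexCover M) (hWM : Disjoint W M) {v w : V}
    {e : Sym2 V} (hv : v ∈ W) (he : e ∈ G.incidenceSet v) (hw : w ∈ e) : w ∈ W ∪ M := by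
  obtain ⟨u, rfl⟩ := Sym2.mem_iff_exists.mp he.2
  have hu : u ∈ M := (hM he.1).resolve_left (Finset.disjoint_left.mp hWM hv)
  rcases Sym2.mem_iff.mp hw with rfl | rfl
  · exact Finset.mem_union_left M hv
  · exact Finset.mem_union_right W hu

variable [G.LocallyFinite]

theorem pairwiseDisjoint_incidenceFinset_of_isIndepSet {s : Set V} (hs : G.IsIndepSet s) :
    s.PairwiseDisjoint fun v => G.incidenceFinset v := by
  intro v hv w hw hvw
  refine Finset.disjoint_left.mpr fun e hev hew => hs hv hw hvw ?_
  rw [SimpleGraph.mem_incidenceFinset] at hev hew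
  exact G.adj_of_mem_incidenceSet hvw hev hew

theorem card_biUnion_incidenceFinset_of_isIndepSet (hW : G.IsIndepSet W) :
    (W.biUnion fun v => G.incidenceFinset v).card = ∑ v ∈ W, G.degree v := by
  rw [Finset.card_biUnion (pairwiseDisjoint_incidenceFinset_of_isIndepSet hW)]
  simp only [SimpleGraph.card_incidenceFinset_eq_degree]

theorem sum_degree_le_card_edgesWithin_union (hM : G.IsVertexCover M) (hWM : Disjoint W M) :
    ∑ v ∈ W, G.degree v ≤ (edgesWithin G (W ∪ M)).card := by
  have hW : G.IsIndepSet W :=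
    (SimpleGraph.isIndepSet_compl_iff_isVertexCover.mpr hM).mono
      (Set.subset_compl_iff_disjoint_right.mpr (Finset.disjoint_coe.mpr hWM))
  rw [← card_biUnion_incidenceFinset_of_isIndepSet hW]
  refine Finset.card_le_card fun e he => ?_
  obtain ⟨v, hv, hev⟩ := Finset.mem_biUnion.mp he
  rw [SimpleGraph.mem_incidenceFinset] at hev
  exact mem_edgesWithin.mpr
    ⟨hev.1, fun w hw => mem_union_of_mem_incidenceSet hM hWM hv hev hw⟩

end DegreeSum

section HighDegree

variable {V : Type*} {G : SimpleGraph V} [G.LocallyFinite] {W M : Finset V} {η α Λ : ℝ}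

theorem card_le_mul_card_of_disjoint_of_lt_degree (hη : 0 < η)
    (hsparse : ∀ S : Finset V, ((edgesWithin G S).card : ℝ) ≤ α * S.card)
    (hΛ : (1 + 1 / η) * α ≤ Λ) (hM : G.IsVertexCover M) (hWM : Disjoint W M)
    (hdeg : ∀ v ∈ W, Λ < G.degree v) : (W.card : ℝ) ≤ η * M.card := by
  by_contra! hlt
  have hWpos : (0 : ℝ) < W.card := hlt.trans_le' (by positivity)
  have hWne : W.Nonempty := Finset.card_pos.mp (by exact_mod_cast hWpos)
  have hα : 0 ≤ α := by
    obtain ⟨v, -⟩ := hWne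
    simpa using (Nat.cast_nonneg _).trans (hsparse {v})
  have hMle : (M.card : ℝ) ≤ W.card / η := by
    rw [le_div_iff₀ hη]
    linarith
  have hsum : (W.card : ℝ) * Λ < ∑ v ∈ W, (G.degree v : ℝ) := by
    simpa using Finset.sum_lt_sum_of_nonempty hWne hdeg
  refine hsum.not_ge ?_
  calc ∑ v ∈ W, (G.degree v : ℝ)
      ≤ ((edgesWithin G (W ∪ M)).card : ℝ) := by
        exact_mod_cast sum_degree_le_card_edgesWithin_union hM hWM
    _ ≤ α * (W ∪ M).card := hsparse (W ∪ M)
    _ = α * (W.card + M.card) := by rw [Finset.card_union_of_disjoint hWM, Nat.cast_add]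
    _ ≤ α * (W.card + W.card / η) := by gcongr
    _ = W.card * ((1 + 1 / η) * α) := by ring
    _ ≤ W.card * Λ := by gcongr

theorem card_le_one_add_mul_card_of_lt_degree {B : Finset V} (hη : 0 < η)
    (hsparse : ∀ S : Finset V, ((edgesWithin G S).card : ℝ) ≤ α * S.card)
    (hΛ : (1 + 1 / η) * α ≤ Λ) (hM : G.IsVertexCover M)
    (hdeg : ∀ v ∈ B, Λ < G.degree v) : (B.card : ℝ) ≤ (1 + η) * M.card := by
  have houtside : ((B \ M).card : ℝ) ≤ η * M.card :=
    card_le_mul_card_of_disjoint_of_lt_degree hη hsparse hΛ hM Finset.sdiff_disjoint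
      fun v hv => hdeg v (Finset.mem_sdiff.mp hv).1
  have hsplit : (B.card : ℝ) ≤ (B \ M).card + M.card := by
    exact_mod_cast Finset.card_le_card_sdiff_add_card
  linarith

end HighDegree

theorem vertex_cover_sparsifier_general {V : Type*} [Fintype V] [DecidableEq V]
    {G H : SimpleGraph V} [DecidableRel G.Adj] {η α β ζ Λ : ℝ} (hη : 0 < η) (hβ : 0 ≤ β)
    (hsparse : ∀ S : Finset V, ((edgesWithin G S).card : ℝ) ≤ α * S.card)
    (hΛ : (1 + 1 / η) * α ≤ Λ) (hHG : H ≤ G)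
    (hH : ∀ e ∈ G.edgeSet, (∀ v ∈ e, (G.degree v : ℝ) ≤ Λ) → e ∈ H.edgeSet)
    {C : Finset V} (hC : ∀ e ∈ H.edgeSet, ∃ v ∈ C, v ∈ e)
    (hCsize : (C.card : ℝ) ≤ β * vertexCoverNumber H + ζ) :
    (∀ e ∈ G.edgeSet,
        ∃ v ∈ C ∪ (Finset.univ.filter fun v : V => Λ < (G.degree v : ℝ)), v ∈ e) ∧
      ((C ∪ (Finset.univ.filter fun v : V => Λ < (G.degree v : ℝ))).card : ℝ) ≤
        (1 + β + η) * vertexCoverNumber G + ζ := by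
  set B := Finset.univ.filter fun v : V => Λ < (G.degree v : ℝ) with hB
  have hcover : G.IsVertexCover (C ∪ B : Finset V) := by
    rw [Finset.coe_union]
    exact isVertexCover_union_of_avoiding_edges_mem (by simpa [hB] using hH)
      (isVertexCover_coe_iff_forall_mem_edgeSet.mpr hC)
  refine ⟨isVertexCover_coe_iff_forall_mem_edgeSet.mp hcover, ?_⟩
  obtain ⟨M, hM, hMcard⟩ := exists_isVertexCover_card_eq_vertexCoverNumber G
  have hBcard : (B.card : ℝ) ≤ (1 + η) * vertexCoverNumber G := by
    rw [← hMcard]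
    exact card_le_one_add_mul_card_of_lt_degree hη hsparse hΛ hM (by simp [hB])
  calc ((C ∪ B).card : ℝ) ≤ C.card + B.card := by exact_mod_cast Finset.card_union_le C B
    _ ≤ (β * vertexCoverNumber H + ζ) + (1 + η) * vertexCoverNumber G := by gcongr
    _ ≤ (β * vertexCoverNumber G + ζ) + (1 + η) * vertexCoverNumber G := by
        gcongr
        exact vertexCoverNumber_mono hHG
    _ = (1 + β + η) * vertexCoverNumber G + ζ := by ring

/-- Suppose every vertex subset `S` of `G` induces at most `α·|S|` edges (as is the case when
`G` has arboricity at most `α`), `Λ = (1 + 1/η)·2α`, and `H ≤ G` is a spanning subgraph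
containing every edge of `G` both of whose endpoints have degree at most `Λ` in `G`. If `C` is
a vertex cover of `H` with `|C| ≤ β·τ(H) + ζ`, then `C ∪ V_>^Λ` is a vertex cover of `G` with
`|C ∪ V_>^Λ| ≤ (1 + β + η)·τ(G) + ζ`. -/
theorem vertex_cover_sparsifier {V : Type*} [Fintype V] [DecidableEq V]
    (G H : SimpleGraph V) [DecidableRel G.Adj]
    (η α β ζ : ℝ) (hη : 0 < η) (hα : 1 ≤ α) (hβ : 0 ≤ β) (hζ : 0 ≤ ζ)
    (harb : ∀ S : Finset V,
      ((G.edgeFinset.filter fun e => ∀ v ∈ e, v ∈ S).card : ℝ) ≤ α * S.card)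
    (hHG : H ≤ G)
    (hH : ∀ e ∈ G.edgeSet,
      (∀ v ∈ e, (G.degree v : ℝ) ≤ (1 + 1 / η) * (2 * α)) → e ∈ H.edgeSet)
    (C : Finset V) (hC : ∀ e ∈ H.edgeSet, ∃ v ∈ C, v ∈ e)
    (hCsize : (C.card : ℝ) ≤ β * vertexCoverNumber H + ζ) :
    (∀ e ∈ G.edgeSet, ∃ v ∈ C ∪ (Finset.univ.filter fun v : V =>
        (1 + 1 / η) * (2 * α) < (G.degree v : ℝ)), v ∈ e) ∧
      (((C ∪ (Finset.univ.filter fun v : V =>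
          (1 + 1 / η) * (2 * α) < (G.degree v : ℝ))).card : ℝ) ≤
        (1 + β + η) * vertexCoverNumber G + ζ) :=
  vertex_cover_sparsifier_general hη hβ
    (by simpa only [filter_edgeFinset_eq_edgesWithin] using harb)
    (by gcongr; linarith) hHG hH hC hCsize
end

section
/- Let n be a natural number and let Y, Q ⊆ {1, …, n}. Consider the simple graph on the 4n vertices {u_i, v_i, a_i, b_i : i ∈ {1, …, n}} whose edges are exactly: {u_i, a_i} and {v_i, b_i} for every i ∈ {1, …, n}, {a_i, b_i} for each i ∈ Y, and {u_i, v_i} for each i ∈ Q. Then the number of connected components of this graph equals 2n − |Y ∪ Q|. -/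
/-- The graph on vertices `{u_i, v_i, a_i, b_i : i ∈ [n]}` (encoded as `Fin n × Fin 4`, with
`u_i = (i, 0)`, `v_i = (i, 1)`, `a_i = (i, 2)`, `b_i = (i, 3)`) whose edges are `{u_i, a_i}`
and `{v_i, b_i}` for every `i`, `{a_i, b_i}` for `i ∈ Y`, and `{u_i, v_i}` for `i ∈ Q`. -/
noncomputable def ccEncodingGraph (n : ℕ) (Y Q : Finset (Fin n)) :
    SimpleGraph (Fin n × Fin 4) :=
  SimpleGraph.fromEdgeSet
    ({e | ∃ i : Fin n, e = s(((i, 0) : Fin n × Fin 4), (i, 2))} ∪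
      {e | ∃ i : Fin n, e = s(((i, 1) : Fin n × Fin 4), (i, 3))} ∪
      {e | ∃ i ∈ Y, e = s(((i, 2) : Fin n × Fin 4), (i, 3))} ∪
      {e | ∃ i ∈ Q, e = s(((i, 0) : Fin n × Fin 4), (i, 1))})

/-!
Vertices with different indices `i` are never connected. For each `i` the edges `{u_i, a_i}` and
`{v_i, b_i}` join the four vertices into two pairs, which merge exactly when `{a_i, b_i}` or
`{u_i, v_i}` is present, i.e. when `i ∈ Y ∪ Q`. Hence the components correspond to the disjoint
union of `Fin n` (the components of the `u_i`) and `(Y ∪ Q)ᶜ` (the remaining components, of the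
`v_i`), which has `n + (n - |Y ∪ Q|)` elements.
-/

section ComponentLabelling

variable {V L : Type*} {G : SimpleGraph V} {label : V → L}

theorem eq_of_reachable_of_forall_adj_eq (label_eq : ∀ ⦃x y⦄, G.Adj x y → label x = label y)
    {x y : V} (h : G.Reachable x y) : label x = label y := by
  obtain ⟨walk⟩ := h
  induction walk with
  | nil => rfl
  | cons hadj _ ih => exact (label_eq hadj).trans ih

/-- The identification of the connected components of a graph with the values of a vertex labelling
that is constant along edges, given a representative of each label that is reachable from all
vertices carrying that label. -/
def connectedComponentEquivOfLabel (label : V → L) (rep : L → V)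
    (label_eq : ∀ ⦃x y⦄, G.Adj x y → label x = label y)
    (label_rep : Function.LeftInverse label rep)
    (reachable_rep : ∀ x, G.Reachable x (rep (label x))) : G.ConnectedComponent ≃ L where
  toFun := SimpleGraph.ConnectedComponent.lift label fun _ _ walk _ =>
    eq_of_reachable_of_forall_adj_eq label_eq walk.reachable
  invFun l := G.connectedComponentMk (rep l)
  left_inv := SimpleGraph.ConnectedComponent.ind fun x =>
    SimpleGraph.ConnectedComponent.sound (reachable_rep x).symm
  right_inv := label_rep

end ComponentLabelling

namespace ccEncodingGraph

variable {n : ℕ} {Y Q : Finset (Fin n)}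

theorem adj_iff {x y : Fin n × Fin 4} :
    (ccEncodingGraph n Y Q).Adj x y ↔
      ∃ i, s(x, y) = s((i, 0), (i, 2)) ∨ s(x, y) = s((i, 1), (i, 3)) ∨
        (i ∈ Y ∧ s(x, y) = s((i, 2), (i, 3))) ∨ (i ∈ Q ∧ s(x, y) = s((i, 0), (i, 1))) := by
  have ne_of_mk_eq {i : Fin n} {k l : Fin 4} (hkl : k ≠ l) (h : s(x, y) = s((i, k), (i, l))) :
      x ≠ y := by
    rintro rfl
    obtain ⟨hk, hl⟩ | ⟨hl, hk⟩ := Sym2.eq_iff.1 h <;>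
      exact hkl (congrArg Prod.snd (hk.symm.trans hl))
  simp only [ccEncodingGraph, SimpleGraph.fromEdgeSet_adj, Set.mem_union, Set.mem_ofPred_eq,
    exists_or, or_assoc, and_iff_left_iff_imp]
  rintro (⟨i, h⟩ | ⟨i, h⟩ | ⟨i, -, h⟩ | ⟨i, -, h⟩) <;> exact ne_of_mk_eq (by decide) h

theorem reachable_u_a (i : Fin n) : (ccEncodingGraph n Y Q).Reachable (i, 0) (i, 2) :=
  (adj_iff.2 ⟨i, .inl rfl⟩).reachable

theorem reachable_v_b (i : Fin n) : (ccEncodingGraph n Y Q).Reachable (i, 1) (i, 3) :=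
  (adj_iff.2 ⟨i, .inr (.inl rfl)⟩).reachable

theorem reachable_u_v {i : Fin n} (hi : i ∈ Y ∪ Q) :
    (ccEncodingGraph n Y Q).Reachable (i, 0) (i, 1) := by
  obtain hY | hQ := Finset.mem_union.1 hi
  · have reachable_a_b : (ccEncodingGraph n Y Q).Reachable (i, 2) (i, 3) :=
      (adj_iff.2 ⟨i, .inr (.inr (.inl ⟨hY, rfl⟩))⟩).reachable
    exact (reachable_u_a i).trans (reachable_a_b.trans (reachable_v_b i).symm)
  · exact (adj_iff.2 ⟨i, .inr (.inr (.inr ⟨hQ, rfl⟩))⟩).reachable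

/-- The component of a vertex of `ccEncodingGraph n Y Q`, where `Z = Y ∪ Q`: `inl i` is the
component of `u_i`, and `inr i` is that of `v_i` when it differs from the component of `u_i`. -/
def componentLabel (Z : Finset (Fin n)) : Fin n × Fin 4 → Fin n ⊕ ↥Zᶜ
  | (i, 0) | (i, 2) => .inl i
  | (i, 1) | (i, 3) => if hi : i ∈ Z then .inl i else .inr ⟨i, Finset.mem_compl.2 hi⟩

/-- A vertex in the component with a given `componentLabel`: `u_i` for `inl i` and `v_i` for
`inr i`. -/
def componentRep (Z : Finset (Fin n)) : Fin n ⊕ ↥Zᶜ → Fin n × Fin 4 :=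
  Sum.elim (fun i => (i, 0)) (fun i => (i, 1))

theorem componentLabel_v_of_mem {Z : Finset (Fin n)} {i : Fin n} (hi : i ∈ Z) :
    componentLabel Z (i, 1) = .inl i :=
  dif_pos hi

theorem componentLabel_v_of_notMem {Z : Finset (Fin n)} {i : Fin n} (hi : i ∉ Z) :
    componentLabel Z (i, 1) = .inr ⟨i, Finset.mem_compl.2 hi⟩ :=
  dif_neg hi

theorem componentLabel_componentRep (Z : Finset (Fin n)) :
    Function.LeftInverse (componentLabel Z) (componentRep Z)
  | .inl _ => rfl
  | .inr i => componentLabel_v_of_notMem (Finset.mem_compl.1 i.2)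

theorem componentLabel_eq_of_adj ⦃x y : Fin n × Fin 4⦄ (h : (ccEncodingGraph n Y Q).Adj x y) :
    componentLabel (Y ∪ Q) x = componentLabel (Y ∪ Q) y := by
  have label_eq_of_mk_eq {p q : Fin n × Fin 4} (hxy : s(x, y) = s(p, q))
      (hpq : componentLabel (Y ∪ Q) p = componentLabel (Y ∪ Q) q) :
      componentLabel (Y ∪ Q) x = componentLabel (Y ∪ Q) y := by
    obtain ⟨rfl, rfl⟩ | ⟨rfl, rfl⟩ := Sym2.eq_iff.1 hxy
    exacts [hpq, hpq.symm]
  obtain ⟨i, hua | hvb | ⟨hY, hab⟩ | ⟨hQ, huv⟩⟩ := adj_iff.1 h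
  · exact label_eq_of_mk_eq hua rfl
  · exact label_eq_of_mk_eq hvb rfl
  · exact label_eq_of_mk_eq hab (componentLabel_v_of_mem (Finset.mem_union_left Q hY)).symm
  · exact label_eq_of_mk_eq huv (componentLabel_v_of_mem (Finset.mem_union_right Y hQ)).symm

theorem reachable_v_componentRep (i : Fin n) :
    (ccEncodingGraph n Y Q).Reachable (i, 1)
      (componentRep (Y ∪ Q) (componentLabel (Y ∪ Q) (i, 1))) := by
  by_cases hi : i ∈ Y ∪ Q
  · rw [componentLabel_v_of_mem hi]
    exact (reachable_u_v hi).symm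
  · rw [componentLabel_v_of_notMem hi]
    exact .rfl

theorem reachable_componentRep : ∀ x : Fin n × Fin 4,
    (ccEncodingGraph n Y Q).Reachable x (componentRep (Y ∪ Q) (componentLabel (Y ∪ Q) x))
  | (_, 0) => .rfl
  | (i, 1) => reachable_v_componentRep i
  | (i, 2) => (reachable_u_a i).symm
  | (i, 3) => (reachable_v_b i).symm.trans (reachable_v_componentRep i)

/-- The parametrization of the components of `ccEncodingGraph n Y Q` by `componentLabel`. -/
noncomputable def connectedComponentEquiv (Y Q : Finset (Fin n)) :
    (ccEncodingGraph n Y Q).ConnectedComponent ≃ Fin n ⊕ ↥(Y ∪ Q)ᶜ :=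
  connectedComponentEquivOfLabel (componentLabel (Y ∪ Q)) (componentRep (Y ∪ Q))
    componentLabel_eq_of_adj (componentLabel_componentRep (Y ∪ Q)) reachable_componentRep

end ccEncodingGraph

/-- The number of connected components of the inner-product encoding graph equals
`2n − |Y ∪ Q|`. -/
theorem ccEncodingGraph_card_connectedComponent (n : ℕ) (Y Q : Finset (Fin n)) :
    Nat.card (ccEncodingGraph n Y Q).ConnectedComponent = 2 * n - (Y ∪ Q).card := by
  have card_union_le : (Y ∪ Q).card ≤ n := card_finset_fin_le (Y ∪ Q)
  calc
    Nat.card (ccEncodingGraph n Y Q).ConnectedComponent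
      = Nat.card (Fin n ⊕ ↥(Y ∪ Q)ᶜ) :=
        Nat.card_congr (ccEncodingGraph.connectedComponentEquiv Y Q)
    _ = n + (n - (Y ∪ Q).card) := by
      rw [Nat.card_sum, Nat.card_fin, Nat.card_eq_fintype_card, Fintype.card_coe,
        Finset.card_compl, Fintype.card_fin]
    _ = 2 * n - (Y ∪ Q).card := by omega
end
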